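/- For all (b,c) ∈ ℤ_{≥0}², the specialization of Q_{b,c} at z = 1 and w = 1 satisfies Q_{b,c}(x,y,1,1) = (−1)^c · x^{b+c} · y^{b} · ∏_{j=0}^{b+2c−1}(y − q^{2j}) in K[x,y]. -/

import Mathlib

noncomputable section

open MvPolynomial

/-- The field `K = ℚ(q)` of rational functions in `q` over `ℚ`. -/
abbrev K : Type := RatFunc ℚ

/-- The variable `q ∈ K = ℚ(q)`. -/
def q : K := RatFunc.X

/-- The polynomial ring `K[x,y,z,w]`. -/
abbrev P4 : Type := MvPolynomial (Fin 4) K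

def xP : P4 := X 0
def yP : P4 := X 1
def zP : P4 := X 2
def wP : P4 := X 3

/-- The `K`-algebra map `K[x,y,z,w] → K[x,y,z,w]` rescaling the variables:
`x ↦ q^a·x`, `y ↦ q^b·y`, `z ↦ q^c·z`, `w ↦ q^d·w`. -/
def scl (a b c d : ℤ) : P4 →ₐ[K] P4 :=
  aeval ![C (q ^ a) * X 0, C (q ^ b) * X 1, C (q ^ c) * X 2, C (q ^ d) * X 3]

/-- The polynomials `Q_{b,0}(x,y,z,w)`, defined by the recursion (rec1) of the paper. -/
def Qb0 : ℕ → P4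
  | 0 => 1
  | b + 1 =>
      C (q ^ (4 * (b : ℤ))) * wP * yP * (zP - 1) * scl 0 0 (-4) 0 (Qb0 b)
    + C (q ^ (4 * (b : ℤ))) * wP * xP * (yP - 1) * yP * zP * scl 0 (-2) 0 0 (Qb0 b)
    + C (q ^ (6 * (b : ℤ))) * (wP - 1) * (yP - 1) * scl 0 (-2) 0 (-2) (Qb0 b)
    + C (q ^ (4 * (b : ℤ))) * wP * (xP - 1) * yP * (zP - 1) * scl (-4) 2 (-4) 0 (Qb0 b)
    + C (q ^ (6 * (b : ℤ))) * (wP - 1) * (xP - 1) * yP * scl (-4) 0 0 (-2) (Qb0 b)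

/-- The polynomials `Q_{b,c}(x,y,z,w)`: for `c ≥ 1` they are defined by the
recursion (rec2) of the paper, lowering `c`; for `c = 0` by `Qb0`. -/
def Q : ℕ → ℕ → P4
  | b, 0 => Qb0 b
  | b, c + 1 =>
      - (C (q ^ (4 * (b : ℤ) + 8 * (c : ℤ))) * wP ^ 2 * yP * (zP - 1) * zP)
          * scl 0 0 (-4) 0 (Q b c)
    + (C (q ^ (4 * (b : ℤ) + 4 * (c : ℤ) - 2)) * wP * xP * (yP - 1) * zP)
          * (C (q ^ (2 * (b : ℤ) + 4 * (c : ℤ) + 4)) - C (q ^ (2 : ℤ)) * wP * yP * zP)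
          * scl 0 (-2) 0 0 (Q b c)
    - (C (q ^ (6 * (b : ℤ) + 8 * (c : ℤ))) * (wP - 1) * wP * (yP - 1) * zP)
          * scl 0 (-2) 0 (-2) (Q b c)
    + (C (q ^ (4 * (b : ℤ) + 8 * (c : ℤ) - 2)) * wP * (xP - 1) * (zP - 1))
          * (C (q ^ (2 * (b : ℤ) + 4 * (c : ℤ) + 4)) - C (q ^ (2 : ℤ)) * wP * yP * zP)
          * scl (-4) 2 (-4) 0 (Q b c)
    + (C (q ^ (6 * (b : ℤ) + 8 * (c : ℤ) - 2)) * (wP - 1) * (xP - 1))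
          * (C (q ^ (2 * (b : ℤ) + 4 * (c : ℤ) + 4)) - C (q ^ (2 : ℤ)) * wP * yP * zP)
          * scl (-4) 0 0 (-2) (Q b c)

/-!
At `z = w = 1` every term carrying a factor `z - 1` or `w - 1` vanishes, so each of the two
recursions keeps a single term, in which the only substitution left is `y ↦ q⁻² y`. Up to a power
of `q`, this substitution moves the roots `1, q², …, q^(2(n-1))` to `q², q⁴, …, q^(2n)`, and the
factor `y - 1` puts back the root `1`. The extra factor in the second recursion contributes the
next root.
-/

theorem pow_mul_sub_one_mul_prod_sub_pow {R : Type*} [CommRing R] {r s : R} (hrs : r * s = 1)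
    (y : R) (n : ℕ) :
    r ^ n * (y - 1) * ∏ j ∈ Finset.range n, (s * y - r ^ j) =
      ∏ j ∈ Finset.range (n + 1), (y - r ^ j) := by
  have scale_factor (j : ℕ) : r * (s * y - r ^ j) = y - r ^ (j + 1) := by
    linear_combination y * hrs
  calc r ^ n * (y - 1) * ∏ j ∈ Finset.range n, (s * y - r ^ j)
      = (∏ j ∈ Finset.range n, r * (s * y - r ^ j)) * (y - 1) := by
        rw [Finset.prod_mul_distrib, Finset.prod_const, Finset.card_range]
        ring
    _ = ∏ j ∈ Finset.range (n + 1), (y - r ^ j) := by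
        simp only [scale_factor, Finset.prod_range_succ', pow_zero]

theorem q_ne_zero : q ≠ 0 := RatFunc.X_ne_zero

theorem scl_xP (a b c d : ℤ) : scl a b c d xP = C (q ^ a) * xP := by simp [scl, xP]

theorem scl_yP (a b c d : ℤ) : scl a b c d yP = C (q ^ b) * yP := by simp [scl, yP]

/-- The specialization `P(x,y,z,w) ↦ P(x,y,1,1)`, with `K[x,y]` regarded as a subring of
`K[x,y,z,w]`. -/
def specZ1W1 : P4 →ₐ[K] P4 := aeval ![X 0, X 1, 1, 1]

theorem specZ1W1_xP : specZ1W1 xP = xP := by simp [specZ1W1, xP]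

theorem specZ1W1_yP : specZ1W1 yP = yP := by simp [specZ1W1, yP]

theorem specZ1W1_zP : specZ1W1 zP = 1 := by simp [specZ1W1, zP]

theorem specZ1W1_wP : specZ1W1 wP = 1 := by simp [specZ1W1, wP]

theorem specZ1W1_scl (a b : ℤ) (P : P4) :
    specZ1W1 (scl a b 0 0 P) = scl a b 0 0 (specZ1W1 P) := by
  have comp_comm : specZ1W1.comp (scl a b 0 0) = (scl a b 0 0).comp specZ1W1 := by
    apply algHom_ext
    intro i
    fin_cases i <;> simp [specZ1W1, scl, algebraMap_eq]
  exact DFunLike.congr_fun comp_comm P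

theorem specZ1W1_Qb0_succ (b : ℕ) :
    specZ1W1 (Qb0 (b + 1)) =
      C (q ^ (4 * (b : ℤ))) * xP * (yP - 1) * yP * scl 0 (-2) 0 0 (specZ1W1 (Qb0 b)) := by
  simp only [Qb0, map_add, map_mul, map_sub, map_one, algHom_C, algebraMap_eq, specZ1W1_xP,
    specZ1W1_yP, specZ1W1_zP, specZ1W1_wP, specZ1W1_scl]
  ring

theorem specZ1W1_Q_succ (b c : ℕ) :
    specZ1W1 (Q b (c + 1)) =
      C (q ^ (4 * (b : ℤ) + 4 * (c : ℤ) - 2)) * xP * (yP - 1)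
        * (C (q ^ (2 * (b : ℤ) + 4 * (c : ℤ) + 4)) - C (q ^ (2 : ℤ)) * yP)
        * scl 0 (-2) 0 0 (specZ1W1 (Q b c)) := by
  simp only [Q, map_add, map_mul, map_sub, map_neg, map_one, algHom_C, algebraMap_eq,
    specZ1W1_xP, specZ1W1_yP, specZ1W1_zP, specZ1W1_wP, specZ1W1_scl]
  ring

/-- The product `∏_{j<n} (y − q^{2j})`, a rescaled `q²`-Pochhammer symbol in `y`. -/
def rootProd (n : ℕ) : P4 := ∏ j ∈ Finset.range n, (yP - C (q ^ (2 * j)))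

theorem rootProd_succ (n : ℕ) : rootProd (n + 1) = rootProd n * (yP - C (q ^ (2 * n))) :=
  Finset.prod_range_succ _ n

theorem sub_one_mul_scl_rootProd (n : ℕ) :
    C (q ^ (2 * n)) * (yP - 1) * scl 0 (-2) 0 0 (rootProd n) = rootProd (n + 1) := by
  have hrs : (C (q ^ 2) : P4) * C (q ^ (-2 : ℤ)) = 1 := by
    rw [← C_mul, ← zpow_natCast, ← zpow_add₀ q_ne_zero]
    simp
  simpa only [rootProd, map_prod, map_sub, scl_yP, algHom_C, algebraMap_eq, pow_mul,
    map_pow] using pow_mul_sub_one_mul_prod_sub_pow hrs yP n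

/-- The claimed value of `Q_{b,c}(x,y,1,1)`. -/
def closedForm (b c : ℕ) : P4 :=
  C ((-1) ^ c) * xP ^ (b + c) * yP ^ b * rootProd (b + 2 * c)

theorem sub_one_mul_scl_closedForm (b c : ℕ) :
    C (q ^ (4 * (b : ℤ) + 4 * (c : ℤ))) * (yP - 1) * scl 0 (-2) 0 0 (closedForm b c) =
      C ((-1) ^ c) * xP ^ (b + c) * yP ^ b * rootProd (b + 2 * c + 1) := by
  have q_powers : (C (q ^ (4 * (b : ℤ) + 4 * (c : ℤ))) : P4) * C (q ^ (-2 : ℤ)) ^ b =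
      C (q ^ (2 * (b + 2 * c))) := by
    rw [← C_pow, ← C_mul, ← zpow_natCast, ← zpow_mul, ← zpow_add₀ q_ne_zero, ← zpow_natCast]
    congr 2
    push_cast
    ring
  simp only [closedForm, ← sub_one_mul_scl_rootProd, ← q_powers, map_mul, map_pow, scl_xP, scl_yP,
    algHom_C, algebraMap_eq, zpow_zero, C_1, one_mul]
  ring

theorem closedForm_succ_zero (b : ℕ) :
    closedForm (b + 1) 0 =
      C (q ^ (4 * (b : ℤ))) * xP * (yP - 1) * yP * scl 0 (-2) 0 0 (closedForm b 0) := by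
  have shifted := sub_one_mul_scl_closedForm b 0
  simp only [Nat.cast_zero, mul_zero, add_zero] at shifted
  rw [closedForm, mul_zero, add_zero]
  linear_combination (-xP * yP) * shifted

theorem closedForm_succ_right (b c : ℕ) :
    closedForm b (c + 1) =
      C (q ^ (4 * (b : ℤ) + 4 * (c : ℤ) - 2)) * xP * (yP - 1)
        * (C (q ^ (2 * (b : ℤ) + 4 * (c : ℤ) + 4)) - C (q ^ (2 : ℤ)) * yP)
        * scl 0 (-2) 0 0 (closedForm b c) := by
  have shifted := sub_one_mul_scl_closedForm b c
  have split_prefactor : (C (q ^ (4 * (b : ℤ) + 4 * (c : ℤ))) : P4) =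
      C (q ^ (4 * (b : ℤ) + 4 * (c : ℤ) - 2)) * C (q ^ (2 : ℤ)) := by
    rw [← C_mul, ← zpow_add₀ q_ne_zero, sub_add_cancel]
  have next_root : (C (q ^ (2 * (b : ℤ) + 4 * (c : ℤ) + 4)) : P4) =
      C (q ^ (2 : ℤ)) * C (q ^ (2 * (b + 2 * c + 1))) := by
    rw [← C_mul, ← zpow_natCast, ← zpow_add₀ q_ne_zero]
    congr 2
    push_cast
    ring
  rw [split_prefactor] at shifted
  rw [closedForm, next_root, show b + 2 * (c + 1) = b + 2 * c + 1 + 1 by ring, rootProd_succ,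
    pow_succ (-1 : K), C_mul, C_neg, C_1]
  linear_combination xP * (yP - C (q ^ (2 * (b + 2 * c + 1)))) * shifted

theorem specZ1W1_Qb0 (b : ℕ) : specZ1W1 (Qb0 b) = closedForm b 0 := by
  induction b with
  | zero => simp [Qb0, closedForm, rootProd]
  | succ b ih => rw [specZ1W1_Qb0_succ, ih, closedForm_succ_zero]

/-- `Q_{b,c}(x,y,1,1) = (−1)^c x^{b+c} y^{b} ∏_{j<b+2c}(y − q^{2j})`. -/
theorem Q_spec_z1w1 (b c : ℕ) :
    aeval ![(X 0 : P4), X 1, 1, 1] (Q b c) =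
      C ((-1 : K) ^ c) * (X 0 : P4) ^ (b + c) * (X 1 : P4) ^ b
        * (∏ j ∈ Finset.range (b + 2 * c), ((X 1 : P4) - C (q ^ (2 * j)))) := by
  change specZ1W1 (Q b c) = closedForm b c
  induction c with
  | zero => exact specZ1W1_Qb0 b
  | succ c ih => rw [specZ1W1_Q_succ, ih, closedForm_succ_right]
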